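/- arXiv:2506.23904 — 2 statements merged into one kernel-verified Lean document; each statement's English description precedes it below -/
import Mathlib

section
/- Let d ≥ 4, let F = Σ_{|α|=d−1} X_α Y^α be the full Perazzo form and A_F = R/Ann_R(F) the full Perazzo algebra. Then HF_{A_F}(0) = HF_{A_F}(d) = 1, and for every 1 ≤ i ≤ d−1, HF_{A_F}(i) = binom(i+m−1, m−1) + binom(d−i+m−1, m−1). -/
open MvPolynomial

/-- The differential operator `∏_i ∂^{s i}/∂X_i^{s i}` acting on `K[X_i : i ∈ σ]`
(any order of composition gives the same operator, since partial derivatives commute). -/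
noncomputable def diffOp {K : Type*} [CommSemiring K] {σ : Type*} [DecidableEq σ]
    (s : σ →₀ ℕ) : Module.End K (MvPolynomial σ K) :=
  (s.support.toList.map fun i =>
    ((MvPolynomial.pderiv i).toLinearMap : Module.End K (MvPolynomial σ K)) ^ s i).prod

/-- The apolarity (differentiation) action `f ∘ F` of a polynomial `f` on a polynomial `F`:
each variable of `f` acts as partial differentiation with respect to the corresponding
variable of `F`. -/
noncomputable def diffAction {K : Type*} [CommSemiring K] {σ : Type*} [DecidableEq σ]
    (f F : MvPolynomial σ K) : MvPolynomial σ K :=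
  ∑ s ∈ f.support, f.coeff s • diffOp s F

/-- The apolar annihilator ideal `Ann(F) = {f : f ∘ F = 0}`.  (This set is already an
ideal, so taking the ideal span does not change it.) -/
noncomputable def annIdeal {K : Type*} [CommSemiring K] {σ : Type*} [DecidableEq σ]
    (F : MvPolynomial σ K) : Ideal (MvPolynomial σ K) :=
  Ideal.span {f | diffAction f F = 0}

/-- Multi-indices `α = (i_1, …, i_m) ∈ ℕ^m` with `i_1 + ⋯ + i_m = d - 1`,
indexing the `x`-variables of a full Perazzo algebra. -/
abbrev MIdx (m d : ℕ) := {α : Fin m → ℕ // ∑ i, α i = d - 1}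

instance (m d : ℕ) : Fintype (MIdx m d) :=
  Fintype.ofFinset (Finset.Nat.antidiagonalTuple m (d - 1))
    (fun _ => Finset.Nat.mem_antidiagonalTuple)

/-- The variable index set of a full Perazzo algebra:
`x_α` for `|α| = d - 1` together with `y_1, …, y_m`. -/
abbrev PIdx (m d : ℕ) := MIdx m d ⊕ Fin m

/-- The full Perazzo form `F = ∑_{|α| = d-1} X_α Y^α`. -/
noncomputable def perazzoForm (K : Type*) [CommSemiring K] (m d : ℕ) :
    MvPolynomial (PIdx m d) K :=
  ∑ α : MIdx m d, X (Sum.inl α) * ∏ j, X (Sum.inr j) ^ (α.1 j)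

/-- The Hilbert function of the graded quotient `K[X_i : i ∈ σ] / I` in degree `n`:
the `K`-dimension of the image of the homogeneous degree-`n` part. -/
noncomputable def hilbertFn {K : Type*} [Field K] {σ : Type*}
    (I : Ideal (MvPolynomial σ K)) (n : ℕ) : ℕ :=
  Module.finrank K
    ((MvPolynomial.homogeneousSubmodule σ K n).map (Ideal.Quotient.mkₐ K I).toLinearMap)


section helpers

open scoped IsMulCommutative

variable {K : Type*} [Field K] {σ : Type*}

/-- partial derivative as an endomorphism -/
noncomputable def pdE (K : Type*) [Field K] {σ : Type*} (i : σ) : Module.End K (MvPolynomial σ K) :=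
  (MvPolynomial.pderiv i).toLinearMap

theorem pdE_comm (i j : σ) : pdE K i * pdE K j = pdE K j * pdE K i := by
  refine MvPolynomial.linearMap_ext fun s => LinearMap.ext_ring ?_
  simp only [pdE, LinearMap.comp_apply, Module.End.mul_apply, Derivation.coeFn_coe, pderiv_monomial]
  by_cases h : i = j
  · subst h; rfl
  · rw [tsub_right_comm]
    simp [h, Ne.symm h]
    ring_nf

/-- the commutative algebra generated by partial derivatives -/
noncomputable abbrev pdAlg (K : Type*) [Field K] (σ : Type*) : Subalgebra K (Module.End K (MvPolynomial σ K)) :=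
  Algebra.adjoin K (Set.range (pdE K (σ := σ)))

instance pdAlg_comm : IsMulCommutative (pdAlg K σ) :=
  Algebra.isMulCommutative_adjoin K (by
    rintro _ ⟨i, rfl⟩ _ ⟨j, rfl⟩; exact pdE_comm i j)

/-- action map -/
noncomputable def actA (K : Type*) [Field K] (σ : Type*) : MvPolynomial σ K →ₐ[K] pdAlg K σ :=
  MvPolynomial.aeval fun i => ⟨pdE K i, Algebra.subset_adjoin ⟨i, rfl⟩⟩

noncomputable def act (K : Type*) [Field K] (σ : Type*) :
    MvPolynomial σ K →ₐ[K] Module.End K (MvPolynomial σ K) :=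
  (pdAlg K σ).val.comp (actA K σ)

theorem act_X (i : σ) : act K σ (X i) = pdE K i := by
  simp [act, actA]

theorem diffOp_eq [DecidableEq σ] (s : σ →₀ ℕ) : diffOp s = act K σ (monomial s 1) := by
  rw [MvPolynomial.monomial_eq, C_1, one_mul, Finsupp.prod, ← Finset.prod_map_toList, map_list_prod,
    List.map_map, diffOp]
  congr 2
  funext i
  simp [act_X, pdE]

theorem diffAction_eq [DecidableEq σ] (f F : MvPolynomial σ K) : diffAction f F = act K σ f F := by
  conv_rhs => rw [f.as_sum]
  rw [map_sum, LinearMap.sum_apply, diffAction]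
  refine Finset.sum_congr rfl fun s _ => ?_
  rw [diffOp_eq, ← LinearMap.smul_apply, ← map_smul, smul_monomial, smul_eq_mul, mul_one]

theorem mem_annIdeal [DecidableEq σ] (f F : MvPolynomial σ K) :
    f ∈ annIdeal F ↔ act K σ f F = 0 := by
  constructor
  · intro h
    refine Submodule.span_induction ?_ ?_ ?_ ?_ h
    · intro x hx
      rw [← diffAction_eq]; exact hx
    · simp
    · intro x y _ _ hx hy
      simp [hx, hy]
    · intro a x _ hx
      simp [hx]
  · intro h
    exact Ideal.subset_span (by rw [Set.mem_ofPred_eq, diffAction_eq, h])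

/-- `f ↦ f ∘ F` -/
noncomputable def actOn (F : MvPolynomial σ K) : MvPolynomial σ K →ₗ[K] MvPolynomial σ K :=
  (LinearMap.applyₗ F).comp (act K σ).toLinearMap

theorem actOn_apply (F f : MvPolynomial σ K) : actOn F f = act K σ f F := rfl

theorem hilbertFn_eq [DecidableEq σ] (F : MvPolynomial σ K) (n : ℕ) :
    hilbertFn (annIdeal F) n =
      Module.finrank K (Submodule.span K
        ((fun s => act K σ (monomial s 1) F) '' {s : σ →₀ ℕ | s.degree = n})) := by
  have h1 : Submodule.span K
        ((fun s => act K σ (monomial s 1) F) '' {s : σ →₀ ℕ | s.degree = n})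
      = (homogeneousSubmodule σ K n).map (actOn F) := by
    rw [homogeneousSubmodule_eq_finsupp_supported, AddMonoidAlgebra.supported_eq_span_single,
      Submodule.map_span, Set.image_image]
    rfl
  rw [h1, hilbertFn]
  set H := homogeneousSubmodule σ K n
  have e1 := LinearMap.quotKerEquivRange
    ((Ideal.Quotient.mkₐ K (annIdeal F)).toLinearMap.comp H.subtype)
  have e2 := LinearMap.quotKerEquivRange ((actOn F).comp H.subtype)
  have hk : LinearMap.ker ((Ideal.Quotient.mkₐ K (annIdeal F)).toLinearMap.comp H.subtype)
      = LinearMap.ker ((actOn F).comp H.subtype) := by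
    ext x
    simp [actOn_apply, Ideal.Quotient.eq_zero_iff_mem, mem_annIdeal]
  rw [LinearMap.range_comp, Submodule.range_subtype] at e1 e2
  rw [← e1.finrank_eq, ← e2.finrank_eq, hk]

theorem act_monomial_add (s s' : σ →₀ ℕ) (p : MvPolynomial σ K) :
    act K σ (monomial (s + s') 1) p = act K σ (monomial s 1) (act K σ (monomial s' 1) p) := by
  rw [← Module.End.mul_apply, ← map_mul, monomial_mul, one_mul]

theorem act_monomial_single (i : σ) (t : σ →₀ ℕ) (c : K) :
    act K σ (monomial (Finsupp.single i 1) 1) (monomial t c) =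
      monomial (t - Finsupp.single i 1) (c * t i) := by
  have := act_X (K := K) i
  rw [X] at this
  rw [this]
  simp [pdE, pderiv_monomial]

theorem act_monomial [CharZero K] (s t : σ →₀ ℕ) : ∃ c : K, (c ≠ 0 ↔ s ≤ t) ∧
    act K σ (monomial s 1) (monomial t 1) = monomial (t - s) c := by
  induction s using Finsupp.induction_linear generalizing t with
  | zero => exact ⟨1, by simp, by
      have : (monomial (0 : σ →₀ ℕ)) (1 : K) = 1 := rfl
      simp [this]⟩
  | add f g hf hg =>
    obtain ⟨c, hc, h1⟩ := hg t
    obtain ⟨c', hc', h2⟩ := hf (t - g)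
    refine ⟨c * c', ?_, ?_⟩
    · rw [mul_ne_zero_iff, hc, hc']
      constructor
      · rintro ⟨h, h'⟩
        exact (le_tsub_iff_right h).1 h'
      · intro h
        have : g ≤ t := le_trans le_add_self h
        exact ⟨this, (le_tsub_iff_right this).2 h⟩
    · have : (monomial (t - g)) c = c • (monomial (t - g)) (1 : K) := by simp [smul_monomial]
      rw [act_monomial_add, h1, this, map_smul, h2, smul_monomial, smul_eq_mul, tsub_tsub, add_comm f]
  | single i k =>
    induction k generalizing t with
    | zero => exact ⟨1, by simp, by
        have : (monomial (0 : σ →₀ ℕ)) (1 : K) = 1 := rfl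
        simp [this]⟩
    | succ k ih =>
      obtain ⟨c, hc, h1⟩ := ih t
      refine ⟨c * (t - Finsupp.single i k : σ →₀ ℕ) i, ?_, ?_⟩
      · rw [mul_ne_zero_iff, hc, Finsupp.single_le_iff, Finsupp.single_le_iff, Nat.cast_ne_zero,
          Finsupp.tsub_apply, Finsupp.single_eq_same]
        omega
      · rw [add_comm k 1, Finsupp.single_add, act_monomial_add, h1, act_monomial_single, tsub_tsub,
          add_comm (Finsupp.single i k)]

theorem linInd_of_dual {ι V : Type*} [AddCommGroup V] [Module K V] (v : ι → V)
    (l : ι → V →ₗ[K] K) (h1 : ∀ i, l i (v i) ≠ 0) (h2 : ∀ i j, j ≠ i → l i (v j) = 0) :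
    LinearIndependent K v := by
  rw [linearIndependent_iff']
  intro s g hg i hi
  have := congrArg (l i) hg
  rw [map_sum, map_zero, Finset.sum_eq_single i] at this
  · simpa [h1 i] using this
  · intro j _ hj; simp [h2 i j hj]
  · intro h; exact absurd hi h

end helpers

section perazzo

variable {K : Type*} [Field K] [CharZero K] {m d : ℕ}

/-- exponent vector supported on the `y` variables -/
noncomputable def eY (d : ℕ) (b : Fin m → ℕ) : PIdx m d →₀ ℕ :=
  Finsupp.equivFunOnFinite.symm (Sum.elim 0 b)

@[simp] theorem eY_inl (b : Fin m → ℕ) (α : MIdx m d) : eY d b (Sum.inl α) = 0 := rfl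
@[simp] theorem eY_inr (b : Fin m → ℕ) (j : Fin m) : eY d b (Sum.inr j) = b j := rfl

theorem eY_degree (b : Fin m → ℕ) : (eY d b).degree = ∑ j, b j := by
  rw [Finsupp.degree_eq_sum, Fintype.sum_sum_type]; simp

theorem eq_eY (s : PIdx m d →₀ ℕ) (h : ∀ α, s (Sum.inl α) = 0) :
    s = eY d (fun j => s (Sum.inr j)) := by
  ext (α | j) <;> simp [h]

theorem perazzo_eq : perazzoForm K m d =
    ∑ α : MIdx m d, monomial (Finsupp.single (Sum.inl α) 1 + eY d α.1) 1 := by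
  refine Finset.sum_congr rfl fun α _ => ?_
  have h : (monomial (eY d α.1)) (1 : K) = ∏ j, X (Sum.inr j) ^ (α.1 j) := by
    rw [monomial_eq, Finsupp.prod_fintype _ _ (by simp), Fintype.prod_sum_type]
    simp
  rw [← h, X, monomial_mul, one_mul]

/-- pure `y`-derivatives of the form -/
noncomputable def Pd (K : Type*) [Field K] (d : ℕ) (b : Fin m → ℕ) : MvPolynomial (PIdx m d) K :=
  act K _ (monomial (eY d b) 1) (perazzoForm K m d)

theorem Pd_eq (b : Fin m → ℕ) : ∃ c : MIdx m d → K, (∀ α, c α ≠ 0 ↔ b ≤ α.1) ∧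
    Pd K d b = ∑ α : MIdx m d,
      monomial (Finsupp.single (Sum.inl α) 1 + eY d α.1 - eY d b) (c α) := by
  choose c hc h using fun α : MIdx m d => act_monomial (K := K) (eY d b)
    (Finsupp.single (Sum.inl α) 1 + eY d α.1)
  refine ⟨c, fun α => ?_, ?_⟩
  · rw [hc]
    constructor
    · intro h j
      simpa using h (Sum.inr j)
    · rintro h (α | j)
      · simp
      · simpa using h j
  · rw [Pd, perazzo_eq, map_sum]
    exact Finset.sum_congr rfl fun α _ => h α

theorem coeff_Pd (b e : Fin m → ℕ) (α : MIdx m d) :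
    coeff (Finsupp.single (Sum.inl α) 1 + eY d e) (Pd K d b) ≠ 0 ↔ α.1 = b + e := by
  obtain ⟨c, hc, h⟩ := Pd_eq (K := K) (d := d) b
  rw [h, coeff_sum]
  simp only [coeff_monomial]
  constructor
  · intro h
    obtain ⟨α', -, h'⟩ := Finset.exists_ne_zero_of_sum_ne_zero h
    rw [ne_eq, ite_eq_right_iff, Classical.not_imp] at h'
    obtain ⟨h1, h2⟩ := h'
    have hle := (hc α').1 h2
    have : α' = α := by
      by_contra hne
      have := DFunLike.congr_fun h1 (Sum.inl α)
      simp [Finsupp.single_apply, hne] at this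
    subst this
    funext j
    have := DFunLike.congr_fun h1 (Sum.inr j)
    have h3 : b j ≤ α'.1 j := hle j
    simp at this
    simp only [Pi.add_apply]
    omega
  · intro hα
    rw [Finset.sum_eq_single α]
    · rw [if_pos]
      · rw [hc, hα]; exact le_self_add
      · ext (α' | j)
        · simp
        · simp [hα]
    · intro α' _ hne
      rw [if_neg]
      intro h1
      have := DFunLike.congr_fun h1 (Sum.inl α)
      simp [Finsupp.single_apply, hne] at this
    · simp

theorem coeff_Pd' (b e : Fin m → ℕ) : coeff (eY d e) (Pd K d b) = 0 := by
  obtain ⟨c, hc, h⟩ := Pd_eq (K := K) (d := d) b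
  rw [h, coeff_sum]
  refine Finset.sum_eq_zero fun α _ => ?_
  rw [coeff_monomial, if_neg]
  intro h1
  have := DFunLike.congr_fun h1 (Sum.inl α)
  simp at this

theorem Pd_eq_zero (b : Fin m → ℕ) (h : d - 1 < ∑ j, b j) : Pd K d b = 0 := by
  obtain ⟨c, hc, h'⟩ := Pd_eq (K := K) (d := d) b
  rw [h']
  refine Finset.sum_eq_zero fun α _ => ?_
  have : c α = 0 := by
    by_contra hne
    have h1 := Finset.sum_le_sum fun j (_ : j ∈ Finset.univ) => (hc α).1 hne j
    have := α.2
    omega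
  rw [this, map_zero]

theorem Pd_zero : Pd K d (0 : Fin m → ℕ) = perazzoForm K m d := by
  have h : eY d (0 : Fin m → ℕ) = 0 := by ext (α | j) <;> simp
  have : (monomial (0 : PIdx m d →₀ ℕ)) (1 : K) = 1 := rfl
  rw [Pd, h, this, map_one]; rfl

theorem act_x (α : MIdx m d) :
    act K _ (monomial (Finsupp.single (Sum.inl α) 1) 1) (perazzoForm K m d)
      = monomial (eY d α.1) 1 := by
  rw [perazzo_eq, map_sum, Finset.sum_eq_single α]
  · rw [act_monomial_single]
    simp
  · intro β _ hne
    rw [act_monomial_single]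
    simp [Finsupp.single_apply, hne]
  · simp

/-- generators of the degree `i` space of derivatives -/
def genSet (K : Type*) [Field K] (m d i : ℕ) : Set (MvPolynomial (PIdx m d) K) :=
  {p | (∃ b : Fin m → ℕ, ∑ j, b j = i ∧ p = Pd K d b) ∨
    (1 ≤ i ∧ ∃ g : Fin m → ℕ, ∑ j, g j + i = d ∧ p = monomial (eY d g) 1)}

theorem span_eq (hm : 2 ≤ m) (hd : 4 ≤ d) (i : ℕ) :
    Submodule.span K ((fun s => act K (PIdx m d) (monomial s 1) (perazzoForm K m d)) ''
      {s | s.degree = i}) = Submodule.span K (genSet K m d i) := by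
  apply le_antisymm
  · rw [Submodule.span_le]
    rintro _ ⟨s, hs, rfl⟩
    simp only [SetLike.mem_coe]
    change s.degree = i at hs
    by_cases h : ∀ α, s (Sum.inl α) = 0
    · refine Submodule.subset_span (Or.inl ⟨fun j => s (Sum.inr j), ?_, ?_⟩)
      · rw [← hs, ← eY_degree (d := d), ← eq_eY s h]
      · rw [Pd, ← eq_eY s h]
    · push Not at h
      obtain ⟨α, hα⟩ := h
      have hle : Finsupp.single (Sum.inl α) 1 ≤ s := by
        rw [Finsupp.single_le_iff]; omega
      have hs' := tsub_add_cancel_of_le hle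
      set s' := s - Finsupp.single (Sum.inl α) 1
      rw [← hs', act_monomial_add, act_x]
      obtain ⟨c, hc, h⟩ := act_monomial (K := K) s' (eY d α.1)
      rw [h]
      by_cases hc0 : c = 0
      · rw [hc0, map_zero]; exact zero_mem _
      have hle' := hc.1 hc0
      have : monomial (eY d α.1 - s') c = c • (monomial (eY d α.1 - s') (1 : K)) := by
        simp [smul_monomial]
      rw [this]
      apply Submodule.smul_mem
      have hdeg := congrArg Finsupp.degree hs'
      have hdeg' := congrArg Finsupp.degree (tsub_add_cancel_of_le hle')
      rw [map_add, hs, Finsupp.degree_single] at hdeg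
      rw [map_add, eY_degree, α.2] at hdeg'
      have hz : ∀ β, (eY d α.1 - s') (Sum.inl β) = 0 := by intro β; simp
      rw [eq_eY _ hz]
      rw [eq_eY _ hz, eY_degree] at hdeg'
      exact Submodule.subset_span (Or.inr ⟨by omega, _, by omega, rfl⟩)
  · rw [Submodule.span_le]
    rintro _ (⟨b, hb, rfl⟩ | ⟨hi, g, hg, rfl⟩)
    · exact Submodule.subset_span ⟨eY d b, by
        change (eY d b).degree = i
        rw [eY_degree, hb], rfl⟩
    · let b : Fin m → ℕ := Pi.single ⟨0, by omega⟩ (i - 1)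
      have hb : ∑ j, b j = i - 1 := by simp [b]
      let α : MIdx m d := ⟨g + b, by
        simp only [Pi.add_apply, Finset.sum_add_distrib, hb]; omega⟩
      obtain ⟨c, hc, h⟩ := act_monomial (K := K) (eY d b) (eY d α.1)
      have hle : eY d b ≤ eY d α.1 := by
        rintro (β | j)
        · simp
        · simp [α]
      have hc0 := hc.2 hle
      have hsub : eY d α.1 - eY d b = eY d g := by
        ext (β | j) <;> simp [α]
      rw [hsub, ← act_x, ← act_monomial_add] at h
      have h2 : monomial (eY d g) (1 : K) = c⁻¹ • monomial (eY d g) c := by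
        rw [smul_monomial, smul_eq_mul, inv_mul_cancel₀ hc0]
      rw [SetLike.mem_coe, h2, ← h]
      refine Submodule.smul_mem _ _ (Submodule.subset_span ⟨_, ?_, rfl⟩)
      change Finsupp.degree _ = i
      rw [map_add, eY_degree, hb, Finsupp.degree_single]
      omega

theorem card_sum (hm : 2 ≤ m) (n : ℕ) :
    Nat.card {b : Fin m → ℕ // ∑ j, b j = n} = (n + m - 1).choose (m - 1) := by
  rw [← Nat.card_congr (Sym.equivNatSumOfFintype (Fin m) n), Nat.card_eq_fintype_card,
    Sym.card_sym_eq_choose, Fintype.card_fin, add_comm m n]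
  apply Nat.choose_symm_of_eq_add
  omega

/-- the basis -/
noncomputable def bas (K : Type*) [Field K] (m d i : ℕ) :
    {b : Fin m → ℕ // ∑ j, b j = i} ⊕ {b : Fin m → ℕ // ∑ j, b j = d - i} →
      MvPolynomial (PIdx m d) K :=
  Sum.elim (fun b => Pd K d b.1) (fun g => monomial (eY d g.1) 1)

theorem bas_linInd (hm : 2 ≤ m) (i : ℕ) (hi' : i ≤ d - 1) :
    LinearIndependent K (bas K m d i) := by
  let e : Fin m → ℕ := Pi.single ⟨0, by omega⟩ (d - 1 - i)
  have he : ∑ j, e j = d - 1 - i := by simp [e]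
  let α : {b : Fin m → ℕ // ∑ j, b j = i} → MIdx m d := fun b => ⟨b.1 + e, by
        simp only [Pi.add_apply, Finset.sum_add_distrib, he, b.2]; omega⟩
  refine linInd_of_dual _ (Sum.elim
    (fun b => lcoeff K (Finsupp.single (Sum.inl (α b)) 1 + eY d e))
    (fun g => lcoeff K (eY d g.1))) ?_ ?_
  · rintro (b | g)
    · simp only [bas, Sum.elim_inl, lcoeff_apply]
      rw [coeff_Pd]
    · simp [bas]
  · rintro (b | g) (b' | g') hne
    · simp only [bas, Sum.elim_inl, lcoeff_apply]
      by_contra h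
      rw [← ne_eq, coeff_Pd] at h
      apply hne
      congr 1
      exact Subtype.ext (add_right_cancel h).symm
    · simp only [bas, Sum.elim_inl, Sum.elim_inr, lcoeff_apply, coeff_monomial]
      rw [if_neg]
      intro h
      have := DFunLike.congr_fun h (Sum.inl (α b))
      simp at this
    · simp only [bas, Sum.elim_inl, Sum.elim_inr, lcoeff_apply, coeff_Pd']
    · simp only [bas, Sum.elim_inr, lcoeff_apply, coeff_monomial]
      rw [if_neg]
      intro h
      apply hne
      congr 1
      apply Subtype.ext
      funext j
      exact DFunLike.congr_fun h (Sum.inr j)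

theorem perazzo_ne_zero (hm : 2 ≤ m) : perazzoForm K m d ≠ 0 := by
  rw [← Pd_zero]
  let e : Fin m → ℕ := Pi.single ⟨0, by omega⟩ (d - 1)
  have := (coeff_Pd (K := K) (d := d) 0 e ⟨e, by simp [e]⟩).2 (by simp)
  intro h
  simp [h] at this

end perazzo

/-- For `d ≥ 4`, the Hilbert function of the full Perazzo algebra `A_F` is
`HF(0) = HF(d) = 1` and `HF(i) = binom(i+m-1, m-1) + binom(d-i+m-1, m-1)` for
`1 ≤ i ≤ d - 1`. -/
theorem hilbert_fullPerazzo
    (K : Type*) [Field K] [CharZero K] (m d : ℕ) (hm : 2 ≤ m) (hd : 4 ≤ d) :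
    hilbertFn (annIdeal (perazzoForm K m d)) 0 = 1 ∧
    hilbertFn (annIdeal (perazzoForm K m d)) d = 1 ∧
    (∀ i : ℕ, 1 ≤ i → i ≤ d - 1 →
      hilbertFn (annIdeal (perazzoForm K m d)) i
        = Nat.choose (i + m - 1) (m - 1) + Nat.choose (d - i + m - 1) (m - 1)) := by
  refine ⟨?_, ?_, ?_⟩
  · rw [hilbertFn_eq, span_eq hm hd]
    have : genSet K m d 0 = {perazzoForm K m d} := by
      ext p
      constructor
      · rintro (⟨b, hb, rfl⟩ | ⟨h, -⟩)
        · have : b = 0 := by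
            funext j
            exact Finset.sum_eq_zero_iff.1 hb j (Finset.mem_univ j)
          rw [this, Pd_zero]; rfl
        · omega
      · rintro rfl
        exact Or.inl ⟨0, by simp, Pd_zero.symm⟩
    rw [this]
    exact finrank_span_singleton (perazzo_ne_zero hm)
  · rw [hilbertFn_eq, span_eq hm hd]
    have : Submodule.span K (genSet K m d d) = Submodule.span K {monomial (eY d 0) 1} := by
      apply le_antisymm
      · rw [Submodule.span_le]
        rintro _ (⟨b, hb, rfl⟩ | ⟨h, g, hg, rfl⟩)
        · rw [Pd_eq_zero b (by omega)]; exact zero_mem _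
        · have : g = 0 := by
            funext j
            exact Finset.sum_eq_zero_iff.1 (by omega) j (Finset.mem_univ j)
          rw [this]
          exact Submodule.subset_span rfl
      · rw [Submodule.span_le, Set.singleton_subset_iff]
        exact Submodule.subset_span (Or.inr ⟨by omega, 0, by simp, rfl⟩)
    rw [this]
    exact finrank_span_singleton (by simp)
  · intro i hi hi'
    rw [hilbertFn_eq, span_eq hm hd]
    have : genSet K m d i = Set.range (bas K m d i) := by
      ext p
      constructor
      · rintro (⟨b, hb, rfl⟩ | ⟨h, g, hg, rfl⟩)
        · exact ⟨Sum.inl ⟨b, hb⟩, rfl⟩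
        · exact ⟨Sum.inr ⟨g, by omega⟩, rfl⟩
      · rintro ⟨(b | g), rfl⟩
        · exact Or.inl ⟨b.1, b.2, rfl⟩
        · exact Or.inr ⟨hi, g.1, by have := g.2; omega, rfl⟩
    rw [this]
    let f1 : Fintype {b : Fin m → ℕ // ∑ j, b j = i} :=
      Fintype.ofEquiv _ (Sym.equivNatSumOfFintype (Fin m) i)
    let f2 : Fintype {b : Fin m → ℕ // ∑ j, b j = d - i} :=
      Fintype.ofEquiv _ (Sym.equivNatSumOfFintype (Fin m) (d - i))
    rw [finrank_span_eq_card (bas_linInd hm i hi'), Fintype.card_sum, ← Nat.card_eq_fintype_card,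
      ← Nat.card_eq_fintype_card, card_sum hm, card_sum hm]
end

section
/- Let d = 3, let F = Σ_{|α|=2} X_α Y^α be the full Perazzo form in m ≥ 2 'y'-variables, and A_F = R/Ann_R(F) the full Perazzo algebra, with n + 1 = binom(m+1, m−1) the number of x-variables. Then the h-vector of A_F is (1, n+m+1, n+m+1, 1), and dim_K A_F = 2(n+m+2). -/
open MvPolynomial

theorem pder_comm {K : Type*} [CommRing K] {σ : Type*} (i j : σ) (p : MvPolynomial σ K) :
    pderiv i (pderiv j p) = pderiv j (pderiv i p) := by
  classical
  induction p using MvPolynomial.induction_on' with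
  | add p q hp hq => simp [hp, hq]
  | monomial s a =>
    simp only [pderiv_monomial]
    by_cases h : i = j
    · subst h; rfl
    · rw [tsub_right_comm]
      congr 1
      simp [Finsupp.single_apply, h, Ne.symm h]
      ring

theorem exists_phi (K : Type*) [Field K] (σ : Type*) [DecidableEq σ] :
    ∃ φ : MvPolynomial σ K →ₐ[K] Module.End K (MvPolynomial σ K),
      (∀ i p, φ (X i) p = pderiv i p) ∧ (∀ f F, diffAction f F = φ f F) := by
  let g : σ → Module.End K (MvPolynomial σ K) := fun i => (pderiv i).toLinearMap
  have hc : ∀ a ∈ Set.range g, ∀ b ∈ Set.range g, a * b = b * a := by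
    rintro _ ⟨i, rfl⟩ _ ⟨j, rfl⟩
    ext1 x
    exact LinearMap.ext fun p => pder_comm i j _
  letI : CommRing (Algebra.adjoin K (Set.range g)) := Algebra.adjoinCommRingOfComm K hc
  let g' : σ → Algebra.adjoin K (Set.range g) :=
    fun i => ⟨g i, Algebra.subset_adjoin ⟨i, rfl⟩⟩
  let φ : MvPolynomial σ K →ₐ[K] Module.End K (MvPolynomial σ K) :=
    (Algebra.adjoin K (Set.range g)).val.comp (aeval g')
  have hm : ∀ s c, φ (monomial s c) = c • diffOp s := by
    intro s c
    simp only [φ, AlgHom.comp_apply, aeval_monomial, ← Algebra.smul_def, map_smul]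
    congr 1
    rw [Finsupp.prod, ← Finset.prod_map_toList, map_list_prod, List.map_map, diffOp]
    rfl
  refine ⟨φ, ?_, ?_⟩
  · intro i p
    simp only [φ, AlgHom.comp_apply, aeval_X]
    rfl
  · intro f F
    conv_rhs => rw [f.as_sum]
    rw [map_sum, LinearMap.sum_apply, diffAction]
    exact Finset.sum_congr rfl fun s _ => by rw [hm, LinearMap.smul_apply]

section
variable {K : Type*} [Field K] {σ : Type*}
  {φ : MvPolynomial σ K →ₐ[K] Module.End K (MvPolynomial σ K)}

theorem phi_mono (h : ∀ i p, φ (X i) p = pderiv i p) (s : σ →₀ ℕ) :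
    ∀ (n : ℕ) (G : MvPolynomial σ K), G.IsHomogeneous n →
      (φ (monomial s 1) G).IsHomogeneous (n - s.degree) ∧
      (n < s.degree → φ (monomial s 1) G = 0) := by
  induction s using Finsupp.induction_linear with
  | zero => intro n G hG; simpa using hG
  | add s t hs ht =>
    intro n G hG
    have e : (monomial (s + t) (1 : K)) = monomial s 1 * monomial t 1 := by simp
    rw [e, map_mul, Module.End.mul_apply, map_add]
    obtain ⟨h1, h2⟩ := ht n G hG
    obtain ⟨h3, h4⟩ := hs _ _ h1
    refine ⟨by convert h3 using 1; omega, fun hlt => ?_⟩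
    by_cases hh : n < t.degree
    · rw [h2 hh, map_zero]
    · exact h4 (by omega)
  | single i a =>
    have e : (monomial (Finsupp.single i a) (1 : K)) = X i ^ a := by
      rw [X_pow_eq_monomial]
    rw [e, Finsupp.degree_single]
    induction a with
    | zero => intro n G hG; simpa using hG
    | succ a ih =>
      intro n G hG
      obtain ⟨h1, h2⟩ := ih (by rw [X_pow_eq_monomial]) n G hG
      rw [pow_succ', map_mul, Module.End.mul_apply, h]
      refine ⟨by convert h1.pderiv (i := i) using 1; omega, fun hlt => ?_⟩
      have h0 : n - a = 0 := by omega
      rw [h0, ← totalDegree_zero_iff_isHomogeneous, totalDegree_eq_zero_iff_eq_C] at h1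
      rw [h1, pderiv_C]

theorem phi_homog (h : ∀ i p, φ (X i) p = pderiv i p) (n k : ℕ) (f G : MvPolynomial σ K)
    (hf : f.IsHomogeneous k) (hG : G.IsHomogeneous n) :
      (φ f G).IsHomogeneous (n - k) ∧ (n < k → φ f G = 0) := by
  have e : φ f G = ∑ s ∈ f.support, f.coeff s • φ (monomial s 1) G := by
    conv_lhs => rw [f.as_sum]
    rw [map_sum, LinearMap.sum_apply]
    refine Finset.sum_congr rfl fun s _ => ?_
    rw [← LinearMap.smul_apply, ← map_smul, smul_monomial, smul_eq_mul, mul_one]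
  have hd : ∀ s ∈ f.support, s.degree = k := by
    intro s hs
    rw [Finsupp.degree_eq_weight_one]
    exact hf (mem_support_iff.mp hs)
  rw [e]
  constructor
  · refine IsHomogeneous.sum _ _ _ fun s hs => ?_
    have := (phi_mono h s n G hG).1
    rw [hd s hs] at this
    exact (homogeneousSubmodule σ K (n-k)).smul_mem _ this
  · intro hlt
    refine Finset.sum_eq_zero fun s hs => ?_
    rw [(phi_mono h s n G hG).2 (by rw [hd s hs]; exact hlt), smul_zero]

theorem disj_of {A B : Submodule K (MvPolynomial σ K)} (j : ℕ)
    (hA : A ≤ LinearMap.ker (homogeneousComponent j)) (hB : B ≤ homogeneousSubmodule σ K j) :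
    A ⊓ B = ⊥ := by
  rw [eq_bot_iff]
  rintro x ⟨hx, hx'⟩
  have h1 := hA hx
  rw [LinearMap.mem_ker, homogeneousComponent_of_mem (hB hx'), if_pos rfl] at h1
  simpa using h1

theorem le_ker {B : Submodule K (MvPolynomial σ K)} (i j : ℕ) (hij : i ≠ j)
    (hB : B ≤ homogeneousSubmodule σ K i) :
    B ≤ LinearMap.ker (homogeneousComponent j) := by
  intro x hx
  rw [LinearMap.mem_ker, homogeneousComponent_of_mem (hB hx)]
  simp [Ne.symm hij]

theorem finrank_homog_one [Fintype σ] :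
    Module.finrank K (homogeneousSubmodule σ K 1) = Fintype.card σ := by
  rw [homogeneousSubmodule_one_eq_span_X, finrank_span_eq_card]
  exact linearIndependent_X σ K

theorem main_abs [Fintype σ] [Nonempty σ] [DecidableEq σ] (F : MvPolynomial σ K)
    (hF : F.IsHomogeneous 3)
    (hs : ∀ i, ∃ a b : σ, ∃ c : K, c ≠ 0 ∧ pderiv a (pderiv b F) = c • X i) :
    hilbertFn (annIdeal F) 0 = 1 ∧
    hilbertFn (annIdeal F) 1 = Fintype.card σ ∧
    hilbertFn (annIdeal F) 2 = Fintype.card σ ∧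
    hilbertFn (annIdeal F) 3 = 1 ∧
    Module.finrank K (MvPolynomial σ K ⧸ annIdeal F) = 2 * (Fintype.card σ + 1) := by
  obtain ⟨φ, hX, hφ⟩ := exists_phi K σ
  have hcomm : ∀ f g : MvPolynomial σ K, ∀ G, φ f (φ g G) = φ g (φ f G) := by
    intro f g G
    rw [← Module.End.mul_apply, ← map_mul, mul_comm, map_mul, Module.End.mul_apply]
  let L : MvPolynomial σ K →ₗ[K] MvPolynomial σ K :=
    (LinearMap.applyₗ F).comp φ.toLinearMap
  have hL : ∀ f, L f = φ f F := fun f => rfl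
  have hI : (annIdeal F).restrictScalars K = LinearMap.ker L := by
    ext f
    rw [Submodule.restrictScalars_mem, LinearMap.mem_ker, hL]
    constructor
    · intro hf
      refine Submodule.span_induction (p := fun f _ => φ f F = 0) ?_ ?_ ?_ ?_ hf
      · intro x hx; rw [← hφ]; exact hx
      · simp
      · intro x y _ _ h1 h2; simp [h1, h2]
      · intro a x _ h1; rw [smul_eq_mul, map_mul, Module.End.mul_apply, h1, map_zero]
    · intro hf
      exact Ideal.subset_span (by rw [Set.mem_setOf_eq, hφ, hf])
  let ψ : (MvPolynomial σ K ⧸ annIdeal F) →ₗ[K] MvPolynomial σ K :=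
    (((annIdeal F).restrictScalars K).liftQ L hI.le).comp
      (Submodule.Quotient.restrictScalarsEquiv K (annIdeal F)).symm.toLinearMap
  have hψ : ψ.comp (Ideal.Quotient.mkₐ K (annIdeal F)).toLinearMap = L := by
    ext1 x; rfl
  have hψi : Function.Injective ψ := by
    have hq : Function.Injective (((annIdeal F).restrictScalars K).liftQ L hI.le) := by
      rw [← LinearMap.ker_eq_bot]
      exact Submodule.ker_liftQ_eq_bot _ _ _ hI.ge
    exact hq.comp (Submodule.Quotient.restrictScalarsEquiv K (annIdeal F)).symm.injective
  let W : ℕ → Submodule K (MvPolynomial σ K) := fun k => (homogeneousSubmodule σ K k).map L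
  have hW : ∀ k, hilbertFn (annIdeal F) k = Module.finrank K (W k) := by
    intro k
    rw [hilbertFn, (Submodule.equivMapOfInjective ψ hψi _).finrank_eq, ← Submodule.map_comp, hψ]
  have hWl : ∀ k, W k ≤ homogeneousSubmodule σ K (3 - k) := by
    rintro k _ ⟨f, hf, rfl⟩
    exact (phi_homog hX 3 k f F hf hF).1
  have hfd : ∀ k, FiniteDimensional K (homogeneousSubmodule σ K k) := fun k =>
    Module.Finite.iff_fg.mpr (homogeneousSubmodule_fg σ K k)
  have hfW : ∀ k, FiniteDimensional K (W k) := fun k => inferInstance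
  have hXW : ∀ i, X i ∈ W 2 := by
    intro i
    obtain ⟨a, b, c, hc, h⟩ := hs i
    refine ⟨c⁻¹ • (X a * X b), ?_, ?_⟩
    · exact Submodule.smul_mem _ _ ((isHomogeneous_X K a).mul (isHomogeneous_X K b))
    · rw [map_smul, hL, map_mul, Module.End.mul_apply, hX, hX, h, smul_smul,
        inv_mul_cancel₀ hc, one_smul]
  have hW2 : W 2 = homogeneousSubmodule σ K 1 := by
    refine le_antisymm (hWl 2) ?_
    rw [homogeneousSubmodule_one_eq_span_X, Submodule.span_le]
    rintro _ ⟨i, rfl⟩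
    exact hXW i
  have r2 : Module.finrank K (W 2) = Fintype.card σ := by rw [hW2, finrank_homog_one]
  have r1 : Module.finrank K (W 1) = Fintype.card σ := by
    rw [← finrank_homog_one (K := K) (σ := σ)]
    have hinj : Function.Injective (L.domRestrict (homogeneousSubmodule σ K 1)) := by
      rw [← LinearMap.ker_eq_bot, eq_bot_iff]
      rintro ⟨f, hf⟩ h0
      have h0 : φ f F = 0 := h0
      have hz : ∀ i, φ f (X i) = 0 := by
        intro i
        obtain ⟨q, -, hq⟩ := hXW i
        rw [← hq, hL, hcomm, h0, map_zero]
      rw [homogeneousSubmodule_one_eq_span_X, Submodule.mem_span_range_iff_exists_fun] at hf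
      obtain ⟨c, rfl⟩ := hf
      have hci : ∀ i, c i = 0 := by
        intro i
        have := hz i
        simpa [map_sum, hX, pderiv_X, Pi.single_apply, MvPolynomial.smul_eq_C_mul] using this
      simp [hci]
    rw [← LinearMap.finrank_range_of_inj hinj, LinearMap.range_domRestrict]
  have hW3 : W 3 = homogeneousSubmodule σ K 0 := by
    refine le_antisymm (hWl 3) ?_
    obtain ⟨i⟩ := ‹Nonempty σ›
    obtain ⟨q, hq, hq'⟩ := hXW i
    have h1 : (1 : MvPolynomial σ K) ∈ W 3 := by
      refine ⟨X i * q, (isHomogeneous_X K i).mul hq, ?_⟩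
      rw [hL, map_mul, Module.End.mul_apply, ← hL q, hq', hX, pderiv_X_self]
    rw [homogeneousSubmodule_zero, Submodule.one_le]
    exact h1
  have f0 : Module.finrank K (homogeneousSubmodule σ K 0) = 1 := by
    rw [homogeneousSubmodule_zero, Submodule.one_eq_span, finrank_span_singleton one_ne_zero]
  have r3 : Module.finrank K (W 3) = 1 := by rw [hW3, f0]
  have hF0 : F ≠ 0 := by
    rintro rfl
    obtain ⟨i⟩ := ‹Nonempty σ›
    obtain ⟨a, b, c, hc, h⟩ := hs i
    rw [map_zero, map_zero] at h
    exact smul_ne_zero hc (X_ne_zero i) h.symm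
  have r0 : Module.finrank K (W 0) = 1 := by
    have : W 0 = Submodule.span K {F} := by
      simp only [W]
      rw [homogeneousSubmodule_zero, Submodule.one_eq_span, Submodule.map_span,
        Set.image_singleton, hL, map_one, Module.End.one_apply]
    rw [this, finrank_span_singleton hF0]
  refine ⟨by rw [hW, r0], by rw [hW, r1], by rw [hW, r2], by rw [hW, r3], ?_⟩
  have hr : LinearMap.range ψ = W 0 ⊔ W 1 ⊔ W 2 ⊔ W 3 := by
    have hrL : LinearMap.range ψ = LinearMap.range L := by
      rw [← hψ]
      refine (LinearMap.range_comp_of_range_eq_top ψ ?_).symm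
      rw [LinearMap.range_eq_top]
      exact Ideal.Quotient.mkₐ_surjective K _
    rw [hrL]
    refine le_antisymm ?_ ?_
    · rintro _ ⟨f, rfl⟩
      rw [← sum_homogeneousComponent f, map_sum]
      refine Submodule.sum_mem _ fun k _ => ?_
      have hk : L (homogeneousComponent k f) ∈ W k :=
        ⟨_, homogeneousComponent_isHomogeneous k f, rfl⟩
      have h4 : 3 < k → L (homogeneousComponent k f) = 0 :=
        (phi_homog hX 3 k _ F (homogeneousComponent_isHomogeneous k f) hF).2
      by_cases hk3 : 3 < k
      · rw [h4 hk3]; exact zero_mem _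
      · have : W k ≤ W 0 ⊔ W 1 ⊔ W 2 ⊔ W 3 := by
          have : k = 0 ∨ k = 1 ∨ k = 2 ∨ k = 3 := by omega
          rcases this with rfl | rfl | rfl | rfl
          · exact le_sup_left.trans (le_sup_left.trans le_sup_left)
          · exact le_sup_right.trans (le_sup_left.trans le_sup_left)
          · exact le_sup_right.trans le_sup_left
          · exact le_sup_right
        exact this hk
    · have : ∀ k, W k ≤ LinearMap.range L := fun k => LinearMap.map_le_range
      exact sup_le (sup_le (sup_le (this _) (this _)) (this _)) (this _)
  rw [← LinearMap.finrank_range_of_inj hψi, hr]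
  have d1 := Submodule.finrank_sup_add_finrank_inf_eq (W 0) (W 1)
  have d2 := Submodule.finrank_sup_add_finrank_inf_eq (W 0 ⊔ W 1) (W 2)
  have d3 := Submodule.finrank_sup_add_finrank_inf_eq (W 0 ⊔ W 1 ⊔ W 2) (W 3)
  have l0 : W 0 ≤ homogeneousSubmodule σ K 3 := hWl 0
  have l1 : W 1 ≤ homogeneousSubmodule σ K 2 := hWl 1
  have l2 : W 2 ≤ homogeneousSubmodule σ K 1 := hWl 2
  have l3 : W 3 ≤ homogeneousSubmodule σ K 0 := hWl 3
  rw [disj_of 2 (le_ker 3 2 (by norm_num) l0) l1, finrank_bot] at d1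
  rw [disj_of 1 (sup_le (le_ker 3 1 (by norm_num) l0) (le_ker 2 1 (by norm_num) l1)) l2,
    finrank_bot] at d2
  rw [disj_of 0 (sup_le (sup_le (le_ker 3 0 (by norm_num) l0) (le_ker 2 0 (by norm_num) l1))
    (le_ker 1 0 (by norm_num) l2)) l3, finrank_bot] at d3
  omega

end

theorem card_MIdx (m : ℕ) (hm : 2 ≤ m) :
    Fintype.card (MIdx m 3) = Nat.choose (m + 1) (m - 1) := by
  have e : MIdx m 3 ≃ (Finset.finsuppAntidiag (Finset.univ : Finset (Fin m)) 2) :=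
    { toFun := fun α => ⟨Finsupp.equivFunOnFinite.symm α.1, by
        simp [Finset.mem_finsuppAntidiag, α.2]⟩
      invFun := fun s => ⟨s.1, by
        have := s.2
        rw [Finset.mem_finsuppAntidiag] at this
        exact this.1⟩
      left_inv := fun α => by ext; simp
      right_inv := fun s => by ext; simp }
  rw [Fintype.card_congr e, Fintype.card_coe, Finset.card_finsuppAntidiag_nat_eq_choose,
    Finset.card_univ, Fintype.card_fin]
  rw [show m + 2 - 1 = m + 1 by omega, ← Nat.choose_symm (by omega : m - 1 ≤ m + 1)]
  congr 1
  omega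

/-- exponent vector of `X_α Y^α`. -/
noncomputable def eVec (m : ℕ) (α : MIdx m 3) : PIdx m 3 →₀ ℕ :=
  Finsupp.equivFunOnFinite.symm (Sum.elim (Pi.single α 1) α.1)

theorem perazzo_eq_s11 (K : Type*) [Field K] (m : ℕ) :
    perazzoForm K m 3 = ∑ α : MIdx m 3, monomial (eVec m α) (1 : K) := by
  unfold perazzoForm
  refine Finset.sum_congr rfl fun α _ => ?_
  rw [monomial_eq, C_1, one_mul, Finsupp.prod_fintype _ _ (by simp), Fintype.prod_sum_type]
  congr 1
  rw [Finset.prod_eq_single α]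
  · simp [eVec]
  · intro b _ hb; simp [eVec, hb]
  · simp

theorem perazzo_homog (K : Type*) [Field K] (m : ℕ) :
    (perazzoForm K m 3).IsHomogeneous 3 := by
  unfold perazzoForm
  refine IsHomogeneous.sum _ _ _ fun α _ => ?_
  have h2 : (∏ j, (X (Sum.inr j) : MvPolynomial (PIdx m 3) K) ^ (α.1 j)).IsHomogeneous
      (∑ j, α.1 j) := by
    refine IsHomogeneous.prod _ _ _ fun j _ => ?_
    simpa using (isHomogeneous_X K (Sum.inr j : PIdx m 3)).pow (α.1 j)
  rw [α.2] at h2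
  exact (isHomogeneous_X K _).mul h2

theorem two_idx {m : ℕ} (β : MIdx m 3) (i j : Fin m) (h1 : β.1 i ≠ 0)
    (h2 : β.1 j - (Pi.single i 1 : Fin m → ℕ) j ≠ 0) :
    β.1 = Pi.single i 1 + Pi.single j 1 := by
  have hle : ∀ k ∈ Finset.univ, (Pi.single i 1 + Pi.single j 1 : Fin m → ℕ) k ≤ β.1 k := by
    intro k _
    simp only [Pi.add_apply, Pi.single_apply] at *
    split_ifs at * <;> subst_vars <;> simp_all <;> omega
  have hsum : ∑ k, (Pi.single i 1 + Pi.single j 1 : Fin m → ℕ) k = ∑ k, β.1 k := by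
    rw [β.2]; simp [Finset.sum_add_distrib]
  have := (Finset.sum_eq_sum_iff_of_le hle).mp hsum
  funext k
  exact (this k (Finset.mem_univ k)).symm

theorem exists_idx {m : ℕ} (α : MIdx m 3) : ∃ i j, α.1 i ≠ 0 ∧
    α.1 j - (Pi.single i 1 : Fin m → ℕ) j ≠ 0 := by
  have h := α.2
  obtain ⟨i, hi⟩ : ∃ i, α.1 i ≠ 0 := by
    by_contra! hc
    simp [hc] at h
  refine ⟨i, ?_⟩
  by_contra! hc
  have hle : ∑ j, α.1 j ≤ ∑ j, (Pi.single i 1 : Fin m → ℕ) j :=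
    Finset.sum_le_sum fun j _ => by have := hc j hi; omega
  rw [h] at hle
  simp at hle

theorem eVec_inl {m : ℕ} (α β : MIdx m 3) :
    eVec m α (Sum.inl β) = if β = α then 1 else 0 := by
  simp [eVec, Pi.single_apply]

theorem eVec_inr {m : ℕ} (α : MIdx m 3) (k : Fin m) : eVec m α (Sum.inr k) = α.1 k := rfl

theorem single_inr {m : ℕ} (i k : Fin m) :
    (Finsupp.single (Sum.inr i : PIdx m 3) 1) (Sum.inr k) = (Pi.single i 1 : Fin m → ℕ) k := by
  by_cases h : k = i
  · subst h; simp
  · rw [Finsupp.single_apply, if_neg (by simpa using Ne.symm h), Pi.single_eq_of_ne h]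

theorem single_inr_inl {m : ℕ} (i : Fin m) (β : MIdx m 3) :
    (Finsupp.single (Sum.inr i : PIdx m 3) 1) (Sum.inl β) = 0 := by
  rw [Finsupp.single_apply, if_neg (by simp)]

theorem single_inl_inr {m : ℕ} (i : Fin m) (β : MIdx m 3) :
    (Finsupp.single (Sum.inl β : PIdx m 3) 1) (Sum.inr i) = 0 := by
  rw [Finsupp.single_apply, if_neg (by simp)]

theorem single_inl {m : ℕ} (α β : MIdx m 3) :
    (Finsupp.single (Sum.inl α : PIdx m 3) 1) (Sum.inl β) = if β = α then 1 else 0 := by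
  by_cases h : β = α
  · subst h; simp
  · rw [Finsupp.single_apply, if_neg (by simpa using Ne.symm h), if_neg h]

theorem perazzo_hs_x (K : Type*) [Field K] [CharZero K] (m : ℕ) (α : MIdx m 3) :
    ∃ a b : PIdx m 3, ∃ c : K, c ≠ 0 ∧
      pderiv a (pderiv b (perazzoForm K m 3)) = c • X (Sum.inl α) := by
  rw [perazzo_eq_s11]
  obtain ⟨i, j, h1, h2⟩ := exists_idx α
  have hα := two_idx α i j h1 h2
  refine ⟨Sum.inr j, Sum.inr i,
    ((α.1 i : ℕ) : K) * ((α.1 j - (Pi.single i 1 : Fin m → ℕ) j : ℕ) : K),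
    mul_ne_zero (Nat.cast_ne_zero.mpr h1) (Nat.cast_ne_zero.mpr h2), ?_⟩
  simp only [map_sum, pderiv_monomial, Finsupp.tsub_apply, eVec_inr, single_inr, one_mul]
  rw [Finset.sum_eq_single α]
  · rw [X, smul_monomial, smul_eq_mul, mul_one]
    refine congrArg (fun s => monomial s _) ?_
    ext v
    rcases v with β | k
    · simp only [Finsupp.tsub_apply, eVec_inl, single_inr_inl, single_inl, Nat.sub_zero]
    · simp only [Finsupp.tsub_apply, eVec_inr, single_inr, single_inl_inr, hα, Pi.add_apply]
      omega
  · intro β _ hβ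
    rw [monomial_eq_zero]
    by_contra hc
    rw [mul_eq_zero, not_or] at hc
    exact hβ (Subtype.ext ((two_idx β i j (Nat.cast_ne_zero.mp hc.1)
      (Nat.cast_ne_zero.mp hc.2)).trans hα.symm))
  · intro h; exact absurd (Finset.mem_univ _) h

theorem perazzo_hs_y (K : Type*) [Field K] [CharZero K] (m : ℕ) (j : Fin m) :
    ∃ a b : PIdx m 3, ∃ c : K, c ≠ 0 ∧
      pderiv a (pderiv b (perazzoForm K m 3)) = c • X (Sum.inr j) := by
  rw [perazzo_eq_s11]
  obtain ⟨α, hα⟩ : ∃ α : MIdx m 3, α.1 = Pi.single j 2 := ⟨⟨Pi.single j 2, by simp⟩, rfl⟩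
  refine ⟨Sum.inr j, Sum.inl α, 2, two_ne_zero, ?_⟩
  simp only [map_sum, pderiv_monomial, Finsupp.tsub_apply, eVec_inr, single_inl_inr, one_mul,
    eVec_inl, Nat.sub_zero]
  rw [Finset.sum_eq_single α]
  · rw [X, smul_monomial, smul_eq_mul, mul_one, if_pos rfl, hα, Pi.single_eq_same]
    refine congrArg₂ (fun s c => monomial s c) ?_ ?_
    · ext v
      rcases v with β | k
      · simp only [Finsupp.tsub_apply, eVec_inl, single_inr_inl, single_inl, Nat.sub_self,
          Nat.sub_zero]
      · simp only [Finsupp.tsub_apply, eVec_inr, single_inr, single_inl_inr, hα,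
          Pi.single_apply, Nat.sub_zero]
        split_ifs <;> rfl
    · norm_num
  · intro β _ hβ
    rw [if_neg (Ne.symm hβ), Nat.cast_zero, zero_mul, map_zero]
  · intro h; exact absurd (Finset.mem_univ _) h

theorem perazzo_hs (K : Type*) [Field K] [CharZero K] (m : ℕ) (v : PIdx m 3) :
    ∃ a b : PIdx m 3, ∃ c : K, c ≠ 0 ∧
      pderiv a (pderiv b (perazzoForm K m 3)) = c • X v := by
  rcases v with α | j
  · exact perazzo_hs_x K m α
  · exact perazzo_hs_y K m j

/-- For `d = 3`, with `n + 1 = binom(m+1, m-1)` the number of `x`-variables, the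
`h`-vector of the full Perazzo algebra `A_F` is `(1, n+m+1, n+m+1, 1)` and
`dim_K A_F = 2(n+m+2)`. -/
theorem hilbert_fullPerazzo_socle_degree_three
    (K : Type*) [Field K] [CharZero K] (m : ℕ) (hm : 2 ≤ m)
    (n : ℕ) (hn : n + 1 = Nat.choose (m + 1) (m - 1)) :
    hilbertFn (annIdeal (perazzoForm K m 3)) 0 = 1 ∧
    hilbertFn (annIdeal (perazzoForm K m 3)) 1 = n + m + 1 ∧
    hilbertFn (annIdeal (perazzoForm K m 3)) 2 = n + m + 1 ∧
    hilbertFn (annIdeal (perazzoForm K m 3)) 3 = 1 ∧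
    Module.finrank K (MvPolynomial (PIdx m 3) K ⧸ annIdeal (perazzoForm K m 3))
      = 2 * (n + m + 2) := by
  haveI : Nonempty (PIdx m 3) := ⟨Sum.inr ⟨0, by omega⟩⟩
  have h := main_abs (perazzoForm K m 3) (perazzo_homog K m) (perazzo_hs K m)
  have hc : Fintype.card (PIdx m 3) = n + m + 1 := by
    rw [Fintype.card_sum, card_MIdx m hm, ← hn, Fintype.card_fin]; omega
  rw [hc] at h
  exact h
end
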